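/- arXiv:1501.01561 — 5 statements merged into one kernel-verified Lean document; each statement's English description precedes it below -/
import Mathlib

section
/- Let X : ℕ → Ω → ℝ be a stationary sequence of random variables and u ∈ ℝ with P{X_1 > u} > 0. Let T*(u) be the first hitting time of the level u and let T1(u) be the inter-cluster size, i.e. P{T1(u) = n} = P{max_{2≤i≤n} X_i ≤ u, X_{n+1} > u | X_1 > u} (with max over the empty index set equal to −∞, so for n = 1 the condition max_{2≤i≤1} is vacuous). Then for every integer n ≥ 1: P{X_1 > u}·P{T1(u) = n} = P{T*(u) = n} − P{T*(u) = n+1}. -/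
open MeasureTheory ProbabilityTheory Filter

/-- First hitting time of the level `u` by the sequence `X` (indexed from 1):
`T*(u) = min {j ≥ 1 : X j > u}`, with value `⊤` if the level is never exceeded. -/
noncomputable def hittingTime {Ω : Type*} (X : ℕ → Ω → ℝ) (u : ℝ) (ω : Ω) : ℕ∞ :=
  sInf ((fun j : ℕ => (j : ℕ∞)) '' {j : ℕ | 1 ≤ j ∧ u < X j ω})

/-- The sequence `X` (indexed from 1) is stationary: for every `k` and `m ≥ 1`
the joint law of `(X_{1+k}, ..., X_{m+k})` equals the joint law of `(X_1, ..., X_m)`. -/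
def IsStationarySeq {Ω : Type*} [MeasurableSpace Ω] (P : Measure Ω)
    (X : ℕ → Ω → ℝ) : Prop :=
  ∀ k m : ℕ, 1 ≤ m →
    P.map (fun ω => fun i : Fin m => X (i.val + 1 + k) ω) =
      P.map (fun ω => fun i : Fin m => X (i.val + 1) ω)

/-! The inter-cluster event `{X 2 ≤ u, …, X n ≤ u, X (n + 1) > u}` says that the shifted sequence
`(X 2, X 3, …)` first exceeds `u` at its `n`-th term, so by stationarity its probability is
`P{T* = n}`. Splitting it according to whether `X 1 > u` gives the claim, because its part on
`{X 1 ≤ u}` is `{T* = n + 1}`. -/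

section HittingTime

variable {Ω : Type*} {X : ℕ → Ω → ℝ} {u : ℝ} {ω : Ω} {n : ℕ}

lemma hittingTime_eq_natCast_iff_isLeast :
    hittingTime X u ω = n ↔ IsLeast {j : ℕ | 1 ≤ j ∧ u < X j ω} n := by
  set s := {j : ℕ | 1 ≤ j ∧ u < X j ω}
  have hcast : StrictMono (fun j : ℕ => (j : ℕ∞)) := Nat.strictMono_cast
  rw [← hcast.map_isLeast]
  refine ⟨fun h => ?_, fun h => h.isGLB.sInf_eq⟩
  have hne : ((fun j : ℕ => (j : ℕ∞)) '' s).Nonempty := by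
    by_contra hempty
    rw [hittingTime, Set.not_nonempty_iff_eq_empty.mp hempty, sInf_empty] at h
    exact ENat.top_ne_natCast n h
  exact h ▸ isLeast_csInf hne

lemma hittingTime_eq_succ_iff :
    hittingTime X u ω = (n + 1 : ℕ) ↔ (∀ i < n, X (i + 1) ω ≤ u) ∧ u < X (n + 1) ω := by
  rw [hittingTime_eq_natCast_iff_isLeast]
  constructor
  · rintro ⟨⟨-, hit⟩, least⟩
    refine ⟨fun i hi => ?_, hit⟩
    by_contra! hlt
    have : n + 1 ≤ i + 1 := least ⟨by omega, hlt⟩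
    omega
  · rintro ⟨below, hit⟩
    refine ⟨⟨by omega, hit⟩, fun j ⟨hj, hlt⟩ => ?_⟩
    obtain ⟨i, rfl⟩ := Nat.exists_eq_add_of_le' hj
    by_contra! hi
    exact (below i (by omega)).not_gt hlt

lemma hittingTime_shift_eq_iff (hn : 1 ≤ n) :
    hittingTime (fun i => X (i + 1)) u ω = n ↔
      (∀ i ∈ Finset.Icc 2 n, X i ω ≤ u) ∧ u < X (n + 1) ω := by
  obtain ⟨m, rfl⟩ := Nat.exists_eq_add_of_le' hn
  rw [hittingTime_eq_succ_iff]
  refine and_congr_left fun _ => ⟨fun h i hi => ?_, fun h i hi => h _ ?_⟩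
  · obtain ⟨h2, him⟩ := Finset.mem_Icc.mp hi
    obtain ⟨j, rfl⟩ := Nat.exists_eq_add_of_le' h2
    exact h j (by omega)
  · exact Finset.mem_Icc.mpr ⟨by omega, by omega⟩

lemma hittingTime_eq_succ_iff_shift (hn : 1 ≤ n) :
    hittingTime X u ω = (n + 1 : ℕ) ↔
      hittingTime (fun i => X (i + 1)) u ω = n ∧ X 1 ω ≤ u := by
  obtain ⟨m, rfl⟩ := Nat.exists_eq_add_of_le' hn
  rw [hittingTime_eq_succ_iff, hittingTime_eq_succ_iff, Nat.forall_lt_succ_left]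
  tauto

end HittingTime

section Measure

variable {Ω : Type*} [MeasurableSpace Ω] {P : Measure Ω} {X : ℕ → Ω → ℝ}

/-- The set of vectors `(x 0, …, x n)` whose last coordinate is the only one exceeding `u`; it turns
`{T* = n + 1}` into an event on the law of `(X 1, …, X (n + 1))`. -/
def firstExceedanceAtLast (u : ℝ) (n : ℕ) : Set (Fin (n + 1) → ℝ) :=
  {x | (∀ i : Fin n, x i.castSucc ≤ u) ∧ u < x (Fin.last n)}

lemma measurableSet_firstExceedanceAtLast (u : ℝ) (n : ℕ) :
    MeasurableSet (firstExceedanceAtLast u n) := by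
  unfold firstExceedanceAtLast
  measurability

lemma map_firstExceedanceAtLast_eq_measure_hittingTime (hX : ∀ i, AEMeasurable (X i) P) (u : ℝ)
    (n : ℕ) :
    P.map (fun ω (i : Fin (n + 1)) => X (i + 1) ω) (firstExceedanceAtLast u n) =
      P {ω | hittingTime X u ω = (n + 1 : ℕ)} := by
  rw [Measure.map_apply_of_aemeasurable (aemeasurable_pi_lambda _ fun i => hX _)
    (measurableSet_firstExceedanceAtLast u n)]
  congr 1 with ω
  simp only [Set.mem_preimage, firstExceedanceAtLast, Set.mem_ofPred_eq, Fin.val_castSucc,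
    Fin.val_last, Fin.forall_iff, hittingTime_eq_succ_iff]

lemma IsStationarySeq.measure_hittingTime_shift (hstat : IsStationarySeq P X)
    (hX : ∀ i, AEMeasurable (X i) P) (u : ℝ) (k : ℕ) {n : ℕ} (hn : 1 ≤ n) :
    P {ω | hittingTime (fun i => X (i + k)) u ω = n} = P {ω | hittingTime X u ω = n} := by
  obtain ⟨m, rfl⟩ := Nat.exists_eq_add_of_le' hn
  rw [← map_firstExceedanceAtLast_eq_measure_hittingTime hX,
    ← map_firstExceedanceAtLast_eq_measure_hittingTime fun i => hX (i + k), hstat k (m + 1) hn]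

lemma IsStationarySeq.measure_inter_hittingTime_shift_add (hstat : IsStationarySeq P X)
    (hX : ∀ i, AEMeasurable (X i) P) (u : ℝ) {n : ℕ} (hn : 1 ≤ n) :
    P ({ω | u < X 1 ω} ∩ {ω | hittingTime (fun i => X (i + 1)) u ω = n}) +
        P {ω | hittingTime X u ω = (n + 1 : ℕ)} =
      P {ω | hittingTime X u ω = n} := by
  have hexceed : NullMeasurableSet {ω | u < X 1 ω} P :=
    nullMeasurableSet_lt aemeasurable_const (hX 1)
  have hnext : {ω | hittingTime X u ω = (n + 1 : ℕ)} =
      {ω | hittingTime (fun i => X (i + 1)) u ω = n} \ {ω | u < X 1 ω} := by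
    ext ω
    simp only [Set.mem_ofPred_eq, Set.mem_sdiff, not_lt, hittingTime_eq_succ_iff_shift hn]
  rw [hnext, Set.inter_comm, measure_inter_add_sdiff₀ _ hexceed,
    hstat.measure_hittingTime_shift hX u 1 hn]

end Measure

/-- For a stationary sequence with `P{X_1 > u} > 0` and every `n ≥ 1`,
`P{X_1 > u} ⬝ P{T1(u) = n} = P{T*(u) = n} − P{T*(u) = n+1}`, where
`P{T1(u) = n} = P{max_{2≤i≤n} X_i ≤ u, X_{n+1} > u | X_1 > u}` is the distribution of
the inter-cluster size and `T*(u)` is the first hitting time of the level `u`. -/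
theorem interCluster_eq_hitting_diff {Ω : Type*} [MeasurableSpace Ω] (P : Measure Ω)
    [IsProbabilityMeasure P] (X : ℕ → Ω → ℝ) (hX : ∀ i, Measurable (X i))
    (hstat : IsStationarySeq P X) (u : ℝ)
    (hu : 0 < P {ω | u < X 1 ω}) (n : ℕ) (hn : 1 ≤ n) :
    (P {ω | u < X 1 ω}).toReal *
        (P[{ω | (∀ i ∈ Finset.Icc 2 n, X i ω ≤ u) ∧ u < X (n + 1) ω} | {ω | u < X 1 ω}]).toReal =
      (P {ω | hittingTime X u ω = (n : ℕ∞)}).toReal -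
        (P {ω | hittingTime X u ω = ((n + 1 : ℕ) : ℕ∞)}).toReal := by
  have hexceed : MeasurableSet {ω | u < X 1 ω} := measurableSet_lt measurable_const (hX 1)
  have hsplit := hstat.measure_inter_hittingTime_shift_add (fun i => (hX i).aemeasurable) u hn
  simp only [hittingTime_shift_eq_iff hn] at hsplit
  rw [← ENNReal.toReal_mul, mul_comm, cond_mul_eq_inter hexceed, ← hsplit,
    ENNReal.toReal_add (measure_ne_top _ _) (measure_ne_top _ _), add_sub_cancel_right]
end

section
/- Let X : ℕ → Ω → ℝ be a stationary sequence of random variables and u ∈ ℝ with P{X_1 > u} > 0. Then for every integer n ≥ 1: P{X_1 > u}·P{T1(u) > n} = P{T*(u) = n+1}, where P{T1(u) > n} = P{max_{2≤i≤n+1} X_i ≤ u | X_1 > u} and T*(u) is the first hitting time of the level u. Equivalently, P{X_1 > u, max_{2≤i≤n+1} X_i ≤ u} = P{max_{1≤i≤n} X_i ≤ u} − P{max_{1≤i≤n+1} X_i ≤ u}. -/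
open MeasureTheory ProbabilityTheory Filter

/-!
Both events say that the only exceedance of `u` in the window `1, …, n + 1` is at an end of it: at
`n + 1` for `T*(u) = n + 1`, at `1` for the inter-cluster event. Either probability is that of no
exceedance at the other `n` indices minus that of no exceedance in the whole window, and
by stationarity the two blocks of `n` indices are equally likely to be free of exceedances.
-/

theorem sInf_natCast_image_eq_iff_isLeast {S : Set ℕ} {n : ℕ} :
    sInf ((fun j : ℕ => (j : ℕ∞)) '' S) = n ↔ IsLeast S n := by
  have hmono : StrictMono fun j : ℕ => (j : ℕ∞) := Nat.strictMono_cast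
  constructor
  · intro h
    have hne : ((fun j : ℕ => (j : ℕ∞)) '' S).Nonempty := by
      by_contra! hempty
      exact ENat.natCast_ne_top n (by rw [← h, hempty, sInf_empty])
    have hleast := isLeast_csInf hne
    rw [h] at hleast
    exact hmono.map_isLeast.mp hleast
  · exact fun h => (hmono.map_isLeast.mpr h).csInf_eq

theorem hittingTime_eq_add_one_iff {Ω : Type*} {X : ℕ → Ω → ℝ} {u : ℝ} {ω : Ω} {n : ℕ} :
    hittingTime X u ω = ((n + 1 : ℕ) : ℕ∞) ↔
      u < X (n + 1) ω ∧ ∀ i ∈ Finset.Icc 1 n, X i ω ≤ u := by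
  rw [hittingTime, sInf_natCast_image_eq_iff_isLeast]
  constructor
  · rintro ⟨⟨-, hlt⟩, hlower⟩
    refine ⟨hlt, fun i hi => ?_⟩
    obtain ⟨h1i, hin⟩ := Finset.mem_Icc.mp hi
    by_contra! hui
    have : n + 1 ≤ i := hlower ⟨h1i, hui⟩
    lia
  · rintro ⟨hlt, hle⟩
    refine ⟨⟨Nat.le_add_left 1 n, hlt⟩, fun j ⟨h1j, huj⟩ => ?_⟩
    by_contra! hjn
    exact huj.not_ge (hle j (Finset.mem_Icc.mpr ⟨h1j, Nat.le_of_lt_succ hjn⟩))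

theorem forall_mem_Icc_add_iff_forall_fin {p : ℕ → Prop} {k n : ℕ} :
    (∀ i ∈ Finset.Icc (1 + k) (n + k), p i) ↔ ∀ i : Fin n, p (i + 1 + k) := by
  constructor
  · exact fun h i => h _ (Finset.mem_Icc.mpr ⟨by lia, by lia⟩)
  · intro h j hj
    obtain ⟨hkj, hjn⟩ := Finset.mem_Icc.mp hj
    obtain ⟨i, rfl⟩ := Nat.exists_eq_add_of_le' hkj
    simpa only [add_assoc] using h ⟨i, by lia⟩

section Measure

variable {Ω : Type*} [MeasurableSpace Ω] {P : Measure Ω}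

theorem measureReal_lt_and_forall_le {ι α : Type*} [DecidableEq ι] [LinearOrder α]
    [TopologicalSpace α] [ClosedIicTopology α] [MeasurableSpace α] [OpensMeasurableSpace α]
    [IsFiniteMeasure P] {X : ι → Ω → α} {i : ι} (hX : AEMeasurable (X i) P) (s : Finset ι)
    (u : α) :
    P.real {ω | u < X i ω ∧ ∀ j ∈ s, X j ω ≤ u} =
      P.real {ω | ∀ j ∈ s, X j ω ≤ u} - P.real {ω | ∀ j ∈ insert i s, X j ω ≤ u} := by
  have hnull : NullMeasurableSet {ω | X i ω ≤ u} P := hX.nullMeasurable measurableSet_Iic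
  have hsplit := measureReal_inter_add_sdiff₀ (s := {ω | ∀ j ∈ s, X j ω ≤ u}) hnull
  have hinter : {ω | ∀ j ∈ s, X j ω ≤ u} ∩ {ω | X i ω ≤ u} =
      {ω | ∀ j ∈ insert i s, X j ω ≤ u} := by
    ext ω
    simp [and_comm]
  have hsdiff : {ω | ∀ j ∈ s, X j ω ≤ u} \ {ω | X i ω ≤ u} =
      {ω | u < X i ω ∧ ∀ j ∈ s, X j ω ≤ u} := by
    ext ω
    simp [and_comm]
  rw [hinter, hsdiff] at hsplit
  exact eq_sub_of_add_eq' hsplit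

variable {X : ℕ → Ω → ℝ}

theorem measureReal_hittingTime_eq_add_one [IsFiniteMeasure P] {n : ℕ}
    (hX : AEMeasurable (X (n + 1)) P) (u : ℝ) :
    P.real {ω | hittingTime X u ω = ((n + 1 : ℕ) : ℕ∞)} =
      P.real {ω | ∀ i ∈ Finset.Icc 1 n, X i ω ≤ u} -
        P.real {ω | ∀ i ∈ Finset.Icc 1 (n + 1), X i ω ≤ u} := by
  simp_rw [hittingTime_eq_add_one_iff]
  rw [measureReal_lt_and_forall_le hX,
    Finset.insert_Icc_right_eq_Icc_add_one (Nat.le_add_left 1 n)]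

namespace IsStationarySeq

theorem measure_forall_mem_Icc_add (hstat : IsStationarySeq P X)
    (hX : ∀ i, AEMeasurable (X i) P) {B : Set ℝ} (hB : MeasurableSet B) (k n : ℕ) :
    P {ω | ∀ i ∈ Finset.Icc (1 + k) (n + k), X i ω ∈ B} =
      P {ω | ∀ i ∈ Finset.Icc 1 n, X i ω ∈ B} := by
  obtain rfl | hn := n.eq_zero_or_pos
  · simp
  have hcube : MeasurableSet {v : Fin n → ℝ | ∀ i, v i ∈ B} := by
    simpa only [Set.pi, Set.mem_univ, true_imp_iff] using
      MeasurableSet.univ_pi fun _ : Fin n => hB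
  have hlaw (l : ℕ) :
      P {ω | ∀ i ∈ Finset.Icc (1 + l) (n + l), X i ω ∈ B} =
        P.map (fun ω => fun i : Fin n => X (i.val + 1 + l) ω) {v | ∀ i, v i ∈ B} := by
    rw [Measure.map_apply_of_aemeasurable (aemeasurable_pi_lambda _ fun i => hX _) hcube]
    simp_rw [forall_mem_Icc_add_iff_forall_fin]
    rfl
  rw [hlaw k, hstat k n hn]
  exact (hlaw 0).symm

theorem measureReal_lt_and_forall_Icc_two_le [IsFiniteMeasure P] (hstat : IsStationarySeq P X)
    (hX : ∀ i, AEMeasurable (X i) P) (u : ℝ) (n : ℕ) :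
    P.real {ω | u < X 1 ω ∧ ∀ i ∈ Finset.Icc 2 (n + 1), X i ω ≤ u} =
      P.real {ω | ∀ i ∈ Finset.Icc 1 n, X i ω ≤ u} -
        P.real {ω | ∀ i ∈ Finset.Icc 1 (n + 1), X i ω ≤ u} := by
  have hshift : P.real {ω | ∀ i ∈ Finset.Icc 2 (n + 1), X i ω ≤ u} =
      P.real {ω | ∀ i ∈ Finset.Icc 1 n, X i ω ≤ u} :=
    congrArg ENNReal.toReal (hstat.measure_forall_mem_Icc_add hX measurableSet_Iic 1 n)
  have hwindow : insert 1 (Finset.Icc 2 (n + 1)) = Finset.Icc 1 (n + 1) :=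
    Finset.insert_Icc_add_one_left_eq_Icc (Nat.le_add_left 1 n)
  rw [measureReal_lt_and_forall_le (hX 1), hshift, hwindow]

end IsStationarySeq

end Measure

/-- For a stationary sequence with `P{X_1 > u} > 0` and every `n ≥ 1`,
`P{X_1 > u} ⬝ P{T1(u) > n} = P{T*(u) = n + 1}`, where
`P{T1(u) > n} = P{max_{2≤i≤n+1} X_i ≤ u | X_1 > u}` and `T*(u)` is the first hitting
time of the level `u`. Equivalently,
`P{X_1 > u, max_{2≤i≤n+1} X_i ≤ u} = P{max_{1≤i≤n} X_i ≤ u} − P{max_{1≤i≤n+1} X_i ≤ u}`. -/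
theorem interCluster_tail_eq_hitting {Ω : Type*} [MeasurableSpace Ω] (P : Measure Ω)
    [IsProbabilityMeasure P] (X : ℕ → Ω → ℝ) (hX : ∀ i, Measurable (X i))
    (hstat : IsStationarySeq P X) (u : ℝ)
    (hu : 0 < P {ω | u < X 1 ω}) (n : ℕ) (hn : 1 ≤ n) :
    (P {ω | u < X 1 ω}).toReal *
        (P[{ω | ∀ i ∈ Finset.Icc 2 (n + 1), X i ω ≤ u} | {ω | u < X 1 ω}]).toReal =
      (P {ω | hittingTime X u ω = ((n + 1 : ℕ) : ℕ∞)}).toReal ∧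
    (P {ω | u < X 1 ω ∧ ∀ i ∈ Finset.Icc 2 (n + 1), X i ω ≤ u}).toReal =
      (P {ω | ∀ i ∈ Finset.Icc 1 n, X i ω ≤ u}).toReal -
        (P {ω | ∀ i ∈ Finset.Icc 1 (n + 1), X i ω ≤ u}).toReal := by
  have hX' (i : ℕ) : AEMeasurable (X i) P := (hX i).aemeasurable
  have hcluster := hstat.measureReal_lt_and_forall_Icc_two_le hX' u n
  refine ⟨?_, hcluster⟩
  rw [← ENNReal.toReal_mul, mul_comm,
    cond_mul_eq_inter (measurableSet_lt measurable_const (hX 1))]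
  exact hcluster.trans (measureReal_hittingTime_eq_add_one (hX' (n + 1)) u).symm
end

section
/- Let X : ℕ → Ω → ℝ be a stationary sequence of random variables and u ∈ ℝ with ρ := P{X_1 > u} > 0. Assume that conditionally on {X_1 > u} the inter-cluster size T1(u) is almost surely finite, i.e. Σ_{i=1}^∞ P{T1(u) = i} = 1. Then for every integer n ≥ 1: P{T*(u) = n+1} = ρ · Σ_{i=n+1}^∞ P{T1(u) = i}, where T*(u) is the first hitting time of the level u. -/
open MeasureTheory ProbabilityTheory Filter

/-- Distribution of the inter-cluster size:
`P{T1(u) = m} = P{max_{2≤i≤m} X_i ≤ u, X_{m+1} > u | X_1 > u}`. -/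
noncomputable def interClusterProb {Ω : Type*} [MeasurableSpace Ω] (P : Measure Ω)
    (X : ℕ → Ω → ℝ) (u : ℝ) (m : ℕ) : ℝ :=
  (P[{ω | (∀ i ∈ Finset.Icc 2 m, X i ω ≤ u) ∧ u < X (m + 1) ω} | {ω | u < X 1 ω}]).toReal

/-!
Stationarity moves the event `{T*(u) = n}` to `{X_2, ..., X_n ≤ u < X_{n+1}}`. Splitting the latter
according to whether `X_1 > u` gives
`P{T*(u) = n} = P{T*(u) = n + 1} + ρ ⬝ P{T1(u) = n}`.
Since the events `{T*(u) = n}` are disjoint and `P` is finite, their probabilities tend to `0`, so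
summing this recursion over all indices past `n` telescopes to the claim.
-/

lemma sInf_natCast_image_eq_natCast_iff {s : Set ℕ} {n : ℕ} :
    sInf ((fun j : ℕ => (j : ℕ∞)) '' s) = n ↔ IsLeast s n := by
  refine ⟨fun h => ?_, fun h => (Nat.mono_cast.map_isLeast h).csInf_eq⟩
  have hne : ((fun j : ℕ => (j : ℕ∞)) '' s).Nonempty := by
    rw [Set.nonempty_iff_ne_empty]
    intro hs
    simp [hs] at h
  obtain ⟨j, hj, hjn⟩ := h ▸ csInf_mem hne
  obtain rfl : j = n := Nat.cast_injective hjn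
  exact ⟨hj, fun i hi => by exact_mod_cast h ▸ sInf_le (Set.mem_image_of_mem _ hi)⟩

lemma hasSum_sub_succ_of_antitone {f : ℕ → ℝ} {l : ℝ} (hf : Antitone f)
    (hl : Tendsto f atTop (nhds l)) (n : ℕ) :
    HasSum (fun i => f (n + i) - f (n + i + 1)) (f n - l) := by
  rw [hasSum_iff_tendsto_nat_of_nonneg fun i => sub_nonneg.2 (hf (n + i).le_succ)]
  have hpartial (m : ℕ) :
      ∑ i ∈ Finset.range m, (f (n + i) - f (n + i + 1)) = f n - f (m + n) := by
    rw [add_comm m n]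
    exact Finset.sum_range_sub' (fun i => f (n + i)) m
  simpa only [hpartial, Function.comp_def] using (hl.comp (tendsto_add_atTop_nat n)).const_sub (f n)

section FirstExceedance

variable {Ω : Type*} {X : ℕ → Ω → ℝ} {u : ℝ}

/-- The event that, from time `a` on, the level `u` is first exceeded at time `n + 1`, that is,
`X_a, ..., X_n ≤ u < X_{n+1}`. For `a = 1` it is `{T*(u) = n + 1}`; for `a = 2` it is the event
`{T1(u) = n}`, to be conditioned on `{X_1 > u}`. -/
def firstExceedance (X : ℕ → Ω → ℝ) (u : ℝ) (a n : ℕ) : Set Ω :=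
  {ω | (∀ i ∈ Finset.Icc a n, X i ω ≤ u) ∧ u < X (n + 1) ω}

lemma firstExceedance_succ_sdiff {a n : ℕ} (han : a ≤ n) :
    firstExceedance X u (a + 1) n \ {ω | u < X a ω} = firstExceedance X u a n := by
  ext ω
  simp only [firstExceedance, ← Finset.insert_Icc_add_one_left_eq_Icc han,
    Finset.forall_mem_insert, Set.mem_sdiff, Set.mem_ofPred_eq, not_lt]
  tauto

lemma hittingTime_preimage_succ (n : ℕ) :
    hittingTime X u ⁻¹' {((n + 1 : ℕ) : ℕ∞)} = firstExceedance X u 1 n := by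
  ext ω
  have hleast : IsLeast {j | 1 ≤ j ∧ u < X j ω} (n + 1) ↔ ω ∈ firstExceedance X u 1 n := by
    constructor
    · rintro ⟨⟨-, hexceed⟩, hlower⟩
      refine ⟨fun i hi => ?_, hexceed⟩
      rw [Finset.mem_Icc] at hi
      by_contra! hlt
      have : n + 1 ≤ i := hlower ⟨hi.1, hlt⟩
      omega
    · rintro ⟨hbelow, hexceed⟩
      refine ⟨⟨by omega, hexceed⟩, fun j ⟨hj, hlt⟩ => ?_⟩
      by_contra! hjn
      exact (hbelow j (Finset.mem_Icc.2 ⟨hj, by omega⟩)).not_gt hlt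
  exact sInf_natCast_image_eq_natCast_iff.trans hleast

lemma pairwise_disjoint_firstExceedance_one :
    Pairwise (Function.onFun Disjoint (firstExceedance X u 1)) := by
  intro m n hmn
  simp only [Function.onFun, ← hittingTime_preimage_succ]
  exact pairwise_disjoint_fiber (hittingTime X u) (by simpa using hmn)

end FirstExceedance

section Probability

variable {Ω : Type*} [MeasurableSpace Ω] {P : Measure Ω} {X : ℕ → Ω → ℝ}

lemma measurableSet_firstExceedance (hX : ∀ i, Measurable (X i)) (u : ℝ) (a n : ℕ) :
    MeasurableSet (firstExceedance X u a n) := by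
  simp only [firstExceedance, Set.ofPred_and, Set.ofPred_forall]
  exact ((Finset.Icc a n).measurableSet_biInter fun i _ =>
    measurableSet_le (hX i) measurable_const).inter
      (measurableSet_lt measurable_const (hX (n + 1)))

lemma tendsto_measureReal_firstExceedance_one [IsFiniteMeasure P] (hX : ∀ i, Measurable (X i))
    (u : ℝ) : Tendsto (fun n => P.real (firstExceedance X u 1 n)) atTop (nhds 0) :=
  (summable_measure_toReal (measurableSet_firstExceedance hX u 1)
    pairwise_disjoint_firstExceedance_one).tendsto_atTop_zero

lemma measureReal_firstExceedance_two_inter [IsFiniteMeasure P] (hX : Measurable (X 1))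
    (u : ℝ) (n : ℕ) :
    P.real (firstExceedance X u 2 n ∩ {ω | u < X 1 ω}) =
      P.real {ω | u < X 1 ω} * interClusterProb P X u n := by
  have hA : MeasurableSet {ω | u < X 1 ω} := measurableSet_lt measurable_const hX
  rw [measureReal_def, Set.inter_comm, ← cond_mul_eq_inter hA, ENNReal.toReal_mul, mul_comm]
  rfl

namespace IsStationarySeq

lemma measure_preimage_shift (hstat : IsStationarySeq P X) (hX : ∀ i, Measurable (X i)) (k : ℕ)
    {m : ℕ} (hm : 1 ≤ m) {B : Set (Fin m → ℝ)} (hB : MeasurableSet B) :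
    P {ω | (fun i : Fin m => X (i + 1 + k) ω) ∈ B} =
      P {ω | (fun i : Fin m => X (i + 1) ω) ∈ B} := by
  have hlaw := congrArg (fun μ => μ B) (hstat k m hm)
  rwa [Measure.map_apply (measurable_pi_lambda _ fun i => hX _) hB,
    Measure.map_apply (measurable_pi_lambda _ fun i => hX _) hB] at hlaw

lemma measure_firstExceedance_add (hstat : IsStationarySeq P X) (hX : ∀ i, Measurable (X i))
    (u : ℝ) {a : ℕ} (ha : 1 ≤ a) (n k : ℕ) :
    P (firstExceedance X u (a + k) (n + k)) = P (firstExceedance X u a n) := by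
  -- Coordinate `i` stands for the variable `X_{i+1}`.
  let B : Set (Fin (n + 1) → ℝ) :=
    {v | (∀ i : Fin (n + 1), a ≤ i + 1 ∧ i + 1 ≤ n → v i ≤ u) ∧ u < v (Fin.last n)}
  have hB : MeasurableSet B := by measurability
  have hB_shift (d : ℕ) : {ω | (fun i : Fin (n + 1) => X (i + 1 + d) ω) ∈ B} =
      firstExceedance X u (a + d) (n + d) := by
    ext ω
    simp only [B, firstExceedance, Set.mem_ofPred_eq, Fin.val_last, Finset.mem_Icc,
      add_right_comm n 1 d]
    refine and_congr_left fun _ => ⟨fun h i hi => ?_, fun h i hi => h _ (by omega)⟩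
    obtain ⟨j, rfl⟩ : ∃ j, i = j + 1 + d := ⟨i - d - 1, by omega⟩
    exact h ⟨j, by omega⟩ (by dsimp only; omega)
  calc P (firstExceedance X u (a + k) (n + k))
      = P {ω | (fun i : Fin (n + 1) => X (i + 1 + k) ω) ∈ B} := by rw [hB_shift]
    _ = P {ω | (fun i : Fin (n + 1) => X (i + 1) ω) ∈ B} :=
      hstat.measure_preimage_shift hX k n.succ_pos hB
    _ = P (firstExceedance X u a n) := congrArg P (hB_shift 0)

lemma measureReal_firstExceedance_one_eq_add [IsFiniteMeasure P] (hstat : IsStationarySeq P X)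
    (hX : ∀ i, Measurable (X i)) (u : ℝ) (n : ℕ) :
    P.real (firstExceedance X u 1 n) = P.real (firstExceedance X u 1 (n + 1)) +
      P.real {ω | u < X 1 ω} * interClusterProb P X u (n + 1) := by
  have hshift : P.real (firstExceedance X u 2 (n + 1)) = P.real (firstExceedance X u 1 n) :=
    congrArg ENNReal.toReal (hstat.measure_firstExceedance_add hX u le_rfl n 1)
  rw [← hshift, ← firstExceedance_succ_sdiff n.succ_pos,
    ← measureReal_firstExceedance_two_inter (hX 1),
    measureReal_sdiff_add_inter (measurableSet_lt measurable_const (hX 1))]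

end IsStationarySeq

end Probability

theorem prob_hitting_eq_tail_sum_general {Ω : Type*} [MeasurableSpace Ω] (P : Measure Ω)
    [IsFiniteMeasure P] (X : ℕ → Ω → ℝ) (hX : ∀ i, Measurable (X i))
    (hstat : IsStationarySeq P X) (u : ℝ) (n : ℕ) :
    HasSum (fun i => P.real {ω | u < X 1 ω} * interClusterProb P X u (n + 1 + i))
      (P.real {ω | hittingTime X u ω = ((n + 1 : ℕ) : ℕ∞)}) := by
  let p (k : ℕ) : ℝ := P.real (firstExceedance X u 1 k)
  have hp_sub (k : ℕ) :
      P.real {ω | u < X 1 ω} * interClusterProb P X u (k + 1) = p k - p (k + 1) :=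
    eq_sub_of_add_eq' (hstat.measureReal_firstExceedance_one_eq_add hX u k).symm
  have hp_anti : Antitone p := antitone_nat_of_succ_le fun k =>
    sub_nonneg.1 (hp_sub k ▸ mul_nonneg measureReal_nonneg ENNReal.toReal_nonneg)
  have hp_zero : Tendsto p atTop (nhds 0) := tendsto_measureReal_firstExceedance_one hX u
  have hhit : P.real {ω | hittingTime X u ω = ((n + 1 : ℕ) : ℕ∞)} = p n :=
    congrArg P.real (hittingTime_preimage_succ n)
  simpa only [hhit, add_right_comm n 1, hp_sub, sub_zero] using
    hasSum_sub_succ_of_antitone hp_anti hp_zero n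

/-- For a stationary sequence with `ρ := P{X_1 > u} > 0`, if the inter-cluster size
`T1(u)` is almost surely finite given `{X_1 > u}` (i.e. `Σ_{i=1}^∞ P{T1(u) = i} = 1`),
then for every `n ≥ 1`, `P{T*(u) = n+1} = ρ ⬝ Σ_{i=n+1}^∞ P{T1(u) = i}`,
where `T*(u)` is the first hitting time of the level `u`. -/
theorem prob_hitting_eq_tail_sum {Ω : Type*} [MeasurableSpace Ω] (P : Measure Ω)
    [IsProbabilityMeasure P] (X : ℕ → Ω → ℝ) (hX : ∀ i, Measurable (X i))
    (hstat : IsStationarySeq P X) (u : ℝ) (hu : 0 < P {ω | u < X 1 ω})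
    (hfin : ∑' i : ℕ, interClusterProb P X u (i + 1) = 1)
    (n : ℕ) (hn : 1 ≤ n) :
    (P {ω | hittingTime X u ω = ((n + 1 : ℕ) : ℕ∞)}).toReal =
      (P {ω | u < X 1 ω}).toReal * ∑' i : ℕ, interClusterProb P X u (n + 1 + i) := by
  rw [← tsum_mul_left]
  exact (prob_hitting_eq_tail_sum_general P X hX hstat u n).tsum_eq.symm
end

section
/- Let X : ℕ → Ω → ℝ be a sequence of random variables with common marginal distribution function F, and suppose X has extremal index θ ∈ (0, 1] in the strong sense: for every real sequence (v_n) and every s > 0, if n(1 − F(v_n)) → s then P{max{X_1,...,X_n} ≤ v_n} → e^{−θs}. Let τ > 0 and let (u_n) be a sequence of thresholds with n(1 − F(u_n)) → τ. Then for every x > 0, lim_{n→∞} P{T*(u_n) > n·x} = e^{−θτx}, where T*(u) = min{j ≥ 1 : X_j > u} is the first hitting time (and T*(u_n) > n·x means T*(u_n) > ⌊n x⌋). -/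
open MeasureTheory Filter

/-!
The event `T*(u) > k` is `max{X_1, ..., X_k} ≤ u`, so the claim is about `p_k(u_n)` with
`p_m(v) = P{M_m ≤ v}`, `k = ⌊n x⌋` and `k (1 - F(u_n)) → x τ`. The hypothesis on maxima speaks only
of sequences `p_m(v_m)` indexed by the length `m` itself, whereas `n ↦ ⌊n x⌋` may repeat or skip
values. If `p_k(u_n)` misses a neighbourhood of the limit for some `n` with `⌊n x⌋ = m`, let `v_m`
be such a `u_n`; for all other `m` let `v_m = u_⌊m/x⌋`. Then `m (1 - F(v_m)) → x τ`, so
`p_m(v_m)` converges and the bad choices occur only finitely often.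
-/

theorem lt_hittingTime_iff {Ω : Type*} (X : ℕ → Ω → ℝ) (u : ℝ) (ω : Ω) (k : ℕ) :
    (k : ℕ∞) < hittingTime X u ω ↔ ∀ i ∈ Finset.Icc 1 k, X i ω ≤ u := by
  rw [← ENat.add_one_le_iff (ENat.natCast_ne_top k), hittingTime, le_sInf_iff,
    Set.forall_mem_image]
  norm_cast
  simp only [Set.mem_ofPred_eq, Finset.mem_Icc, Nat.succ_le_iff, and_imp]
  refine forall₂_congr fun i _ => ?_
  rw [← not_imp_not, not_lt, not_lt]

theorem comap_atTop_eq_of_tendsto {k : ℕ → ℕ} (hk : Tendsto k atTop atTop) :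
    comap k atTop = atTop := by
  refine le_antisymm ?_ hk.le_comap
  simpa only [Nat.cofinite_eq_atTop] using comap_cofinite_le k

theorem tendsto_comap_of_forall_tendsto {ι κ α β γ : Type*} {p : κ → α → β} {d : κ → α → γ}
    {b : Filter κ} {l : Filter γ} {l' : Filter β}
    (h : ∀ v : κ → α, Tendsto (fun m => d m (v m)) b l → Tendsto (fun m => p m (v m)) b l')
    {v₀ : κ → α} (hv₀ : Tendsto (fun m => d m (v₀ m)) b l) {k : ι → κ} {w : ι → α}
    (hw : Tendsto (fun i => d (k i) (w i)) (comap k b) l) :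
    Tendsto (fun i => p (k i) (w i)) (comap k b) l' := by
  intro S hS
  have exists_worst : ∀ m, ∃ a, (a = v₀ m ∨ ∃ i, k i = m ∧ w i = a) ∧
      (p m a ∈ S → ∀ i, k i = m → p m (w i) ∈ S) := by
    intro m
    by_cases hbad : ∃ i, k i = m ∧ p m (w i) ∉ S
    · obtain ⟨i, hi, hpi⟩ := hbad
      exact ⟨w i, Or.inr ⟨i, hi, rfl⟩, fun hp => absurd hp hpi⟩
    · push Not at hbad
      exact ⟨v₀ m, Or.inl rfl, fun _ => hbad⟩
  choose v hv_mem hv_worst using exists_worst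
  have hv : Tendsto (fun m => d m (v m)) b l := by
    refine tendsto_def.2 fun V hV => ?_
    filter_upwards [hv₀.eventually_mem hV, eventually_comap.1 (hw.eventually_mem hV)]
      with m hm₀ hm
    rcases hv_mem m with heq | ⟨i, rfl, heq⟩
    · rwa [Set.mem_preimage, heq]
    · simpa only [Set.mem_preimage, heq] using hm i rfl
  refine eventually_comap.2 ?_
  filter_upwards [h v hv hS] with m hm i hi
  subst hi
  exact hv_worst _ hm i rfl

theorem tendsto_natCast_mul_comp {ι R : Type*} [Field R] [CharZero R] [TopologicalSpace R]
    [ContinuousMul R] {b : Filter ι} {k g : ι → ℕ} {a : ℕ → R} {τ x : R}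
    (ha : Tendsto (fun n : ℕ => n * a n) atTop (nhds τ)) (hg : Tendsto g b atTop)
    (hkg : Tendsto (fun i => (k i : R) / g i) b (nhds x)) :
    Tendsto (fun i => k i * a (g i)) b (nhds (x * τ)) := by
  refine (hkg.mul (ha.comp hg)).congr' ?_
  filter_upwards [hg.eventually_ne_atTop 0] with i hi
  simp only [Function.comp_apply]
  field_simp

theorem tendsto_natFloor_mul_of_forall_tendsto {R α β : Type*} [Field R] [LinearOrder R]
    [IsStrictOrderedRing R] [FloorRing R] [TopologicalSpace R] [OrderTopology R]
    {p : ℕ → α → β} {a : α → R} {l : Filter β} {τ x : R} (hx : 0 < x)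
    (hp : ∀ v : ℕ → α, Tendsto (fun n : ℕ => n * a (v n)) atTop (nhds (x * τ)) →
      Tendsto (fun n => p n (v n)) atTop l)
    {u : ℕ → α} (hu : Tendsto (fun n : ℕ => n * a (u n)) atTop (nhds τ)) :
    Tendsto (fun n : ℕ => p ⌊x * n⌋₊ (u n)) atTop l := by
  have hx' : 0 < x⁻¹ := inv_pos.2 hx
  have hfloor : Tendsto (fun n : ℕ => ⌊x * n⌋₊) atTop atTop := tendsto_nat_floor_mul_atTop x hx
  have hfloor_div {y : R} (hy : 0 < y) :
      Tendsto (fun n : ℕ => (⌊y * n⌋₊ : R) / n) atTop (nhds y) :=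
    (tendsto_nat_floor_mul_div_atTop hy.le).comp tendsto_natCast_atTop_atTop
  have hlevel : Tendsto (fun n : ℕ => ⌊x * n⌋₊ * a (u n)) atTop (nhds (x * τ)) :=
    tendsto_natCast_mul_comp hu tendsto_id (hfloor_div hx)
  have hratio : Tendsto (fun m : ℕ => (m : R) / ⌊x⁻¹ * m⌋₊) atTop (nhds x) := by
    simpa only [inv_div, inv_inv] using (hfloor_div hx').inv₀ hx'.ne'
  have hdefault : Tendsto (fun m : ℕ => m * a (u ⌊x⁻¹ * m⌋₊)) atTop (nhds (x * τ)) :=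
    tendsto_natCast_mul_comp hu (tendsto_nat_floor_mul_atTop x⁻¹ hx') hratio
  rw [← comap_atTop_eq_of_tendsto hfloor] at hlevel ⊢
  exact tendsto_comap_of_forall_tendsto (d := fun (m : ℕ) v => m * a v) hp hdefault hlevel

theorem tendsto_prob_hittingTime_gt_general {Ω : Type*} [MeasurableSpace Ω] (P : Measure Ω)
    (X : ℕ → Ω → ℝ) {tail : ℝ → ℝ} {τ x L : ℝ} (hx : 0 < x)
    (hmax : ∀ v : ℕ → ℝ, Tendsto (fun n : ℕ => n * tail (v n)) atTop (nhds (x * τ)) →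
      Tendsto (fun n : ℕ => (P {ω | ∀ i ∈ Finset.Icc 1 n, X i ω ≤ v n}).toReal) atTop (nhds L))
    {u : ℕ → ℝ} (hu : Tendsto (fun n : ℕ => n * tail (u n)) atTop (nhds τ)) :
    Tendsto (fun n : ℕ => (P {ω | (⌊(n : ℝ) * x⌋₊ : ℕ∞) < hittingTime X (u n) ω}).toReal)
      atTop (nhds L) := by
  simp only [lt_hittingTime_iff, mul_comm _ x]
  exact tendsto_natFloor_mul_of_forall_tendsto
    (p := fun m v => (P {ω | ∀ i ∈ Finset.Icc 1 m, X i ω ≤ v}).toReal) hx hmax hu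

/-- Let `X` have common marginal distribution function `F` and extremal index
`θ ∈ (0,1]` in the strong sense: for every sequence `(v_n)` and every `s > 0` with
`n (1 − F(v_n)) → s` one has `P{max{X_1,...,X_n} ≤ v_n} → exp (−θ s)`.
If `n (1 − F(u_n)) → τ` with `τ > 0`, then for every `x > 0`,
`P{T*(u_n) > ⌊n x⌋} → exp (−θ τ x)` where `T*` is the first hitting time. -/
theorem tendsto_prob_hittingTime_gt {Ω : Type*} [MeasurableSpace Ω] (P : Measure Ω)
    [IsProbabilityMeasure P] (X : ℕ → Ω → ℝ) (F : ℝ → ℝ)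
    (hF : ∀ x : ℝ, F x = (P {ω | X 1 ω ≤ x}).toReal)
    (θ : ℝ) (hθ0 : 0 < θ) (hθ1 : θ ≤ 1)
    (hEI : ∀ (v : ℕ → ℝ) (s : ℝ), 0 < s →
      Tendsto (fun n : ℕ => (n : ℝ) * (1 - F (v n))) atTop (nhds s) →
      Tendsto (fun n : ℕ => (P {ω | ∀ i ∈ Finset.Icc 1 n, X i ω ≤ v n}).toReal)
        atTop (nhds (Real.exp (-θ * s))))
    (τ : ℝ) (hτ : 0 < τ) (u : ℕ → ℝ)
    (hu : Tendsto (fun n : ℕ => (n : ℝ) * (1 - F (u n))) atTop (nhds τ))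
    (x : ℝ) (hx : 0 < x) :
    Tendsto (fun n : ℕ => (P {ω | (⌊(n : ℝ) * x⌋₊ : ℕ∞) < hittingTime X (u n) ω}).toReal)
      atTop (nhds (Real.exp (-θ * τ * x))) := by
  rw [mul_assoc, mul_comm τ]
  exact tendsto_prob_hittingTime_gt_general P X (tail := fun v => 1 - F v) hx
    (hEI · _ (mul_pos hx hτ)) hu
end

section
/- Let X : ℕ → Ω → ℝ be a sequence of random variables with common marginal distribution function F, having extremal index θ ∈ (0, 1] in the strong sense (for every real sequence (v_n) and every s > 0 with n(1 − F(v_n)) → s, P{max{X_1,...,X_n} ≤ v_n} → e^{−θs}). Let (u_n) satisfy n(1 − F(u_n)) → 1. If in addition the family {T*(u_n)/n : n ≥ 1} is uniformly integrable, then lim_{n→∞} E(T*(u_n)/n) = 1/θ, where T*(u) = min{j ≥ 1 : X_j > u} is the first hitting time of the level u. -/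
open MeasureTheory Filter

/-!
The levels controlled by the extremal index are indexed by the number of terms in the maximum, while
`{T*(u_n) > x n}` concerns the first `⌊x n⌋` terms and the level `u_n`. Since
`⌊x n⌋ (1 - F(u_n)) → x τ` when `n (1 - F(u_n)) → τ`, the levels `u_n`, reindexed by `⌊x n⌋`, can be
completed to a sequence to which the extremal index applies, so that `P{T*(u_n) / n > x}` tends to
`e^{-θ τ x}`. Uniform integrability allows the limit to be exchanged with the truncation of the
expectation, and the limit law, exponential with rate `θ τ`, has mean `1 / (θ τ)`.
-/

open Set
open scoped Topology

section Truncation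

variable {ι Ω : Type*} [MeasurableSpace Ω] {μ : Measure Ω} [IsFiniteMeasure μ] {Y : ι → Ω → ℝ}

lemma tendstoUniformly_integral_min (hY : UniformIntegrable Y 1 μ) :
    TendstoUniformly (fun (B : ℝ) i ↦ ∫ ω, min (Y i ω) B ∂μ) (fun i ↦ ∫ ω, Y i ω ∂μ) atTop := by
  have hYi (i : ι) : Integrable (Y i) μ := memLp_one_iff_integrable.1 (hY.memLp i)
  rw [Metric.tendstoUniformly_iff]
  intro ε hε
  obtain ⟨C, hC⟩ := hY.spec one_ne_zero ENNReal.one_ne_top (half_pos hε)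
  filter_upwards [eventually_ge_atTop (C : ℝ)] with B hCB i
  have excess_le (ω : Ω) : ‖Y i ω - min (Y i ω) B‖ₑ ≤ ‖{x | C ≤ ‖Y i x‖₊}.indicator (Y i) ω‖ₑ := by
    rcases le_total (Y i ω) B with hle | hge
    · simp [min_eq_left hle]
    · have hY0 : 0 ≤ Y i ω := C.coe_nonneg.trans (hCB.trans hge)
      have hmem : C ≤ ‖Y i ω‖₊ := (hCB.trans hge).trans (le_abs_self _)
      rw [indicator_of_mem (s := {x | C ≤ ‖Y i x‖₊}) hmem, min_eq_right hge, enorm_le_iff_norm_le,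
        Real.norm_of_nonneg (sub_nonneg.2 hge), Real.norm_of_nonneg hY0]
      linarith [C.coe_nonneg.trans hCB]
  rw [← edist_lt_ofReal]
  calc edist (∫ ω, Y i ω ∂μ) (∫ ω, min (Y i ω) B ∂μ)
      = ‖∫ ω, (Y i ω - min (Y i ω) B) ∂μ‖ₑ := by
        rw [edist_eq_enorm_sub]
        exact congrArg _ (integral_sub (hYi i) ((hYi i).inf (integrable_const B))).symm
    _ ≤ ∫⁻ ω, ‖Y i ω - min (Y i ω) B‖ₑ ∂μ := enorm_integral_le_lintegral_enorm _
    _ ≤ eLpNorm ({x | C ≤ ‖Y i x‖₊}.indicator (Y i)) 1 μ := by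
        rw [eLpNorm_one_eq_lintegral_enorm]
        exact lintegral_mono excess_le
    _ ≤ ENNReal.ofReal (ε / 2) := hC i
    _ < ENNReal.ofReal ε := (ENNReal.ofReal_lt_ofReal_iff hε).2 (half_lt_self hε)

lemma integral_min_eq_intervalIntegral_measureReal_lt {f : Ω → ℝ} (hf : Integrable f μ)
    (hf0 : 0 ≤ f) {A : ℝ} (hA : 0 ≤ A) :
    ∫ ω, min (f ω) A ∂μ = ∫ t in 0..A, μ.real {ω | t < f ω} := by
  have hmin : Integrable (fun ω ↦ min (f ω) A) μ := hf.inf (integrable_const A)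
  rw [hmin.integral_eq_integral_Ioc_meas_le (.of_forall fun ω ↦ le_min (hf0 ω) hA)
    (.of_forall fun ω ↦ min_le_right _ _),
    intervalIntegral.integral_of_le hA]
  refine setIntegral_congr_ae measurableSet_Ioc ?_
  filter_upwards [meas_le_ae_eq_meas_lt μ volume f] with t ht htA
  simp only [Measure.real, ← ht, le_min_iff, htA.2, and_true]

variable {l : Filter ι} [l.IsCountablyGenerated] {S : ℝ → ℝ}

lemma tendsto_integral_min_of_tendsto_measureReal_lt (hY : ∀ i, Integrable (Y i) μ)
    (hY0 : ∀ i, 0 ≤ Y i)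
    (hS : ∀ᵐ t, 0 < t → Tendsto (fun i ↦ μ.real {ω | t < Y i ω}) l (𝓝 (S t)))
    {A : ℝ} (hA : 0 ≤ A) :
    Tendsto (fun i ↦ ∫ ω, min (Y i ω) A ∂μ) l (𝓝 (∫ t in 0..A, S t)) := by
  simp_rw [fun i ↦ integral_min_eq_intervalIntegral_measureReal_lt (hY i) (hY0 i) hA]
  refine intervalIntegral.tendsto_integral_filter_of_dominated_convergence
    (fun _ ↦ μ.real univ) (.of_forall fun i ↦ ?_) (.of_forall fun i ↦ .of_forall fun t _ ↦ ?_)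
    intervalIntegrable_const (hS.mono fun t hSt ht ↦ hSt ?_)
  · have hanti : Antitone fun t ↦ μ.real {ω | t < Y i ω} :=
      fun s t hst ↦ measureReal_mono fun ω hω ↦ hst.trans_lt hω
    exact hanti.measurable.aestronglyMeasurable
  · rw [Real.norm_of_nonneg measureReal_nonneg]
    exact measureReal_mono (subset_univ _)
  · rw [uIoc_of_le hA] at ht
    exact ht.1

lemma tendsto_integral_of_tendsto_measureReal_lt (hY : UniformIntegrable Y 1 μ)
    (hY0 : ∀ i, 0 ≤ Y i)
    (hS : ∀ᵐ t, 0 < t → Tendsto (fun i ↦ μ.real {ω | t < Y i ω}) l (𝓝 (S t)))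
    (hSi : IntegrableOn S (Ioi 0)) :
    Tendsto (fun i ↦ ∫ ω, Y i ω ∂μ) l (𝓝 (∫ t in Ioi 0, S t)) := by
  refine (tendstoUniformly_integral_min hY).tendsto_of_eventually_tendsto
    ?_ (intervalIntegral_tendsto_integral_Ioi 0 hSi tendsto_id)
  filter_upwards [eventually_ge_atTop 0] with A hA
  exact tendsto_integral_min_of_tendsto_measureReal_lt
    (fun i ↦ memLp_one_iff_integrable.1 (hY.memLp i)) hY0 hS hA

end Truncation

lemma tendsto_extend_cofinite {α β γ : Type*} {f : α → β} {a : α → γ} {b : β → γ} {l : Filter γ}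
    (ha : Tendsto a cofinite l) (hb : Tendsto b cofinite l) :
    Tendsto (Function.extend f a b) cofinite l := by
  classical
  intro s hs
  refine (((ha hs).image f).union (hb hs)).subset fun y hy ↦ ?_
  by_cases h : ∃ x, f x = y
  · refine .inl ⟨h.choose, fun hx ↦ hy ?_, h.choose_spec⟩
    rwa [mem_preimage, Function.extend_def, dif_pos h]
  · refine .inr fun hx ↦ hy ?_
    rwa [mem_preimage, Function.extend_apply' _ _ _ h]

-- Along a subsequence on which `m` is injective, put `u k` at the index `m k` and let `v` fill the
-- gaps.
lemma tendsto_diagonal_of_forall_tendsto {ι α β γ : Type*} {l : Filter ι} [l.IsCountablyGenerated]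
    {lβ : Filter β} {lγ : Filter γ} {A : ℕ → α → β} {p : ℕ → α → γ}
    (h : ∀ v : ℕ → α, Tendsto (fun n ↦ A n (v n)) atTop lβ →
      Tendsto (fun n ↦ p n (v n)) atTop lγ)
    {v : ℕ → α} (hv : Tendsto (fun n ↦ A n (v n)) atTop lβ)
    {m : ι → ℕ} {u : ι → α} (hm : Tendsto m l atTop) (hu : Tendsto (fun k ↦ A (m k) (u k)) l lβ) :
    Tendsto (fun k ↦ p (m k) (u k)) l lγ := by
  refine tendsto_of_subseq_tendsto fun ns hns ↦ ?_
  obtain ⟨ψ, hψ, hmψ⟩ := strictMono_subseq_of_tendsto_atTop (hm.comp hns)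
  let f : ℕ → ℕ := fun k ↦ m (ns (ψ k))
  have hf : StrictMono f := hmψ
  let w : ℕ → α := Function.extend f (fun k ↦ u (ns (ψ k))) v
  have w_apply (k : ℕ) : w (f k) = u (ns (ψ k)) := hf.injective.extend_apply _ _ k
  have hAw : (fun n ↦ A n (w n)) =
      Function.extend f (fun k ↦ A (f k) (u (ns (ψ k)))) (fun n ↦ A n (v n)) := by
    ext n
    by_cases hn : ∃ k, f k = n
    · obtain ⟨k, rfl⟩ := hn
      rw [w_apply, hf.injective.extend_apply]
    · simp only [w, Function.extend_apply' _ _ _ hn]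
  have hw : Tendsto (fun n ↦ A n (w n)) atTop lβ := by
    have huψ : Tendsto (fun k ↦ A (f k) (u (ns (ψ k)))) atTop lβ :=
      hu.comp (hns.comp hψ.tendsto_atTop)
    rw [hAw]
    rw [← Nat.cofinite_eq_atTop] at hv huψ ⊢
    exact tendsto_extend_cofinite huψ hv
  refine ⟨ψ, ((h w hw).comp hf.tendsto_atTop).congr fun k ↦ ?_⟩
  simp only [Function.comp_apply, w_apply, f]

lemma tendsto_natCast_mul_comp_s7 {ι : Type*} {l : Filter ι} {a : ℕ → ℝ} {τ x : ℝ} {p q : ι → ℕ}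
    (ha : Tendsto (fun n : ℕ ↦ n * a n) atTop (𝓝 τ)) (hq : Tendsto q l atTop)
    (hpq : Tendsto (fun i ↦ (p i : ℝ) / q i) l (𝓝 x)) :
    Tendsto (fun i ↦ p i * a (q i)) l (𝓝 (x * τ)) := by
  refine (hpq.mul (ha.comp hq)).congr' ?_
  filter_upwards [hq.eventually_ne_atTop 0] with i hi
  simp only [Function.comp_apply]
  field_simp

lemma tendsto_atTop_of_tendsto_div_natCast {m : ℕ → ℕ} {x : ℝ} (hx : 0 < x)
    (hm : Tendsto (fun n ↦ (m n : ℝ) / n) atTop (𝓝 x)) : Tendsto m atTop atTop := by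
  rw [← tendsto_natCast_atTop_iff (R := ℝ)]
  refine (hm.pos_mul_atTop hx tendsto_natCast_atTop_atTop).congr' ?_
  filter_upwards [eventually_ne_atTop 0] with n hn
  field_simp

lemma tendsto_natFloor_mul_div_natCast {x : ℝ} (hx : 0 ≤ x) :
    Tendsto (fun n : ℕ ↦ (⌊x * n⌋₊ : ℝ) / n) atTop (𝓝 x) :=
  (tendsto_nat_floor_mul_div_atTop hx).comp tendsto_natCast_atTop_atTop

lemma tendsto_measureReal_sdiff {ι Ω : Type*} [MeasurableSpace Ω] {μ : Measure Ω}
    [IsFiniteMeasure μ] {l : Filter ι} {s t : ι → Set Ω} {a : ℝ}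
    (hs : Tendsto (fun i ↦ μ.real (s i)) l (𝓝 a)) (ht : Tendsto (fun i ↦ μ.real (t i)) l (𝓝 0)) :
    Tendsto (fun i ↦ μ.real (s i \ t i)) l (𝓝 a) :=
  tendsto_of_tendsto_of_tendsto_of_le_of_le (by simpa only [sub_zero] using hs.sub ht) hs
    (fun _ ↦ le_measureReal_sdiff) (fun _ ↦ measureReal_mono sdiff_subset)

lemma natCast_lt_hittingTime_iff {Ω : Type*} {X : ℕ → Ω → ℝ} {u : ℝ} {ω : Ω} {m : ℕ} :
    m < hittingTime X u ω ↔ ∀ i ∈ Finset.Icc 1 m, X i ω ≤ u := by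
  rw [← ENat.add_one_le_iff (ENat.natCast_ne_top m), hittingTime, le_sInf_iff, forall_mem_image]
  norm_cast
  simp only [mem_ofPred_eq, Finset.mem_Icc, Nat.succ_le_iff, ← not_lt (a := u)]
  grind

lemma lt_toNat_div_iff {T : ℕ∞} {n : ℕ} (hn : n ≠ 0) {x : ℝ} (hx : 0 ≤ x) :
    x < (T.toNat : ℝ) / n ↔ ⌊x * n⌋₊ < T ∧ T ≠ ⊤ := by
  -- For `T = ⊤` the left-hand side is false because `(⊤ : ℕ∞).toNat = 0`.
  rw [lt_div_iff₀ (by positivity), ← Nat.floor_lt (by positivity)]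
  induction T with
  | top => simp
  | coe k => simp

/-- The sequence `X` has extremal index `θ` in the strong sense: `P{M_n ≤ v_n} → e^{-θs}`, where
`M_n = max{X_1, …, X_n}`, along every sequence of levels with `n (1 - F(v_n)) → s > 0`. The
marginal distribution function `F` is that of `X 1`, and the event `{M_n ≤ v_n}` is spelled out as
a bound on each term. -/
def HasExtremalIndex {Ω : Type*} [MeasurableSpace Ω] (P : Measure Ω) (X : ℕ → Ω → ℝ) (θ : ℝ) :
    Prop :=
  ∀ (v : ℕ → ℝ) (s : ℝ), 0 < s →
    Tendsto (fun n : ℕ ↦ n * (1 - P.real {ω | X 1 ω ≤ v n})) atTop (𝓝 s) →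
    Tendsto (fun n : ℕ ↦ P.real {ω | ∀ i ∈ Finset.Icc 1 n, X i ω ≤ v n}) atTop
      (𝓝 (Real.exp (-θ * s)))

namespace HasExtremalIndex

variable {Ω : Type*} [MeasurableSpace Ω] {P : Measure Ω} {X : ℕ → Ω → ℝ} {θ τ x : ℝ} {u : ℕ → ℝ}

lemma tendsto_measureReal_lt_hittingTime (hX : HasExtremalIndex P X θ) (hτ : 0 < τ)
    (hu : Tendsto (fun n : ℕ ↦ n * (1 - P.real {ω | X 1 ω ≤ u n})) atTop (𝓝 τ)) (hx : 0 < x)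
    {m : ℕ → ℕ} (hm : Tendsto (fun n ↦ (m n : ℝ) / n) atTop (𝓝 x)) :
    Tendsto (fun n ↦ P.real {ω | m n < hittingTime X (u n) ω}) atTop
      (𝓝 (Real.exp (-θ * (x * τ)))) := by
  let k : ℕ → ℕ := fun n ↦ ⌈x⁻¹ * n⌉₊
  have hk : Tendsto (fun n : ℕ ↦ (k n : ℝ) / n) atTop (𝓝 x⁻¹) :=
    (tendsto_nat_ceil_mul_div_atTop (inv_nonneg.2 hx.le)).comp tendsto_natCast_atTop_atTop
  have hk_inv : Tendsto (fun n : ℕ ↦ (n : ℝ) / k n) atTop (𝓝 x) := by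
    simpa only [inv_div, inv_inv] using hk.inv₀ (inv_ne_zero hx.ne')
  have hk_atTop := tendsto_atTop_of_tendsto_div_natCast (inv_pos.2 hx) hk
  simp_rw [natCast_lt_hittingTime_iff]
  exact tendsto_diagonal_of_forall_tendsto
    (A := fun n v ↦ n * (1 - P.real {ω | X 1 ω ≤ v}))
    (p := fun n v ↦ P.real {ω | ∀ i ∈ Finset.Icc 1 n, X i ω ≤ v})
    (fun v ↦ hX v (x * τ) (mul_pos hx hτ)) (tendsto_natCast_mul_comp_s7 hu hk_atTop hk_inv)
    (tendsto_atTop_of_tendsto_div_natCast hx hm) (tendsto_natCast_mul_comp_s7 hu tendsto_id hm)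

variable [IsFiniteMeasure P]

lemma tendsto_measureReal_hittingTime_eq_top (hX : HasExtremalIndex P X θ) (hθ : 0 < θ)
    (hτ : 0 < τ)
    (hu : Tendsto (fun n : ℕ ↦ n * (1 - P.real {ω | X 1 ω ≤ u n})) atTop (𝓝 τ)) :
    Tendsto (fun n ↦ P.real {ω | hittingTime X (u n) ω = ⊤}) atTop (𝓝 0) := by
  have hexp : Tendsto (fun x : ℝ ↦ Real.exp (-θ * (x * τ))) atTop (𝓝 0) :=
    Real.tendsto_exp_atBot.comp
      ((tendsto_id.atTop_mul_const hτ).const_mul_atTop_of_neg (neg_neg_of_pos hθ))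
  refine tendsto_order.2 ⟨fun a ha ↦ .of_forall fun n ↦ ha.trans_le measureReal_nonneg,
    fun ε hε ↦ ?_⟩
  obtain ⟨x, hxε, hx⟩ := ((hexp.eventually_lt_const hε).and (eventually_gt_atTop 0)).exists
  have hlt := hX.tendsto_measureReal_lt_hittingTime hτ hu hx
    (tendsto_natFloor_mul_div_natCast hx.le)
  filter_upwards [hlt.eventually_lt_const hxε] with n hn
  refine (measureReal_mono fun ω (hω : hittingTime X (u n) ω = ⊤) ↦ ?_).trans_lt hn
  rw [mem_ofPred_eq, hω]
  exact ENat.natCast_lt_top _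

lemma tendsto_measureReal_lt_toNat_hittingTime_div (hX : HasExtremalIndex P X θ) (hθ : 0 < θ)
    (hτ : 0 < τ)
    (hu : Tendsto (fun n : ℕ ↦ n * (1 - P.real {ω | X 1 ω ≤ u n})) atTop (𝓝 τ)) (hx : 0 < x) :
    Tendsto (fun n : ℕ ↦ P.real {ω | x < ((hittingTime X (u n) ω).toNat : ℝ) / n}) atTop
      (𝓝 (Real.exp (-(θ * τ) * x))) := by
  rw [show -(θ * τ) * x = -θ * (x * τ) by ring]
  have hlt := hX.tendsto_measureReal_lt_hittingTime hτ hu hx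
    (tendsto_natFloor_mul_div_natCast hx.le)
  refine (tendsto_measureReal_sdiff hlt
    (hX.tendsto_measureReal_hittingTime_eq_top hθ hτ hu)).congr' ?_
  filter_upwards [eventually_ne_atTop 0] with n hn
  congr 1 with ω
  exact (lt_toNat_div_iff hn hx.le).symm

end HasExtremalIndex

theorem tendsto_expectation_hittingTime_general {Ω : Type*} [MeasurableSpace Ω] {P : Measure Ω}
    [IsProbabilityMeasure P] {X : ℕ → Ω → ℝ} {θ τ : ℝ} (hX : HasExtremalIndex P X θ) (hθ : 0 < θ)
    (hτ : 0 < τ) {u : ℕ → ℝ}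
    (hu : Tendsto (fun n : ℕ ↦ n * (1 - P.real {ω | X 1 ω ≤ u n})) atTop (𝓝 τ))
    (hUI : UniformIntegrable
      (fun (n : ℕ) (ω : Ω) ↦ ((hittingTime X (u n) ω).toNat : ℝ) / n) 1 P) :
    Tendsto (fun n : ℕ ↦ ∫ ω, ((hittingTime X (u n) ω).toNat : ℝ) / n ∂P) atTop
      (𝓝 (1 / (θ * τ))) := by
  have hθτ : -(θ * τ) < 0 := neg_neg_of_pos (mul_pos hθ hτ)
  have hmean : ∫ t in Ioi (0 : ℝ), Real.exp (-(θ * τ) * t) = 1 / (θ * τ) := by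
    rw [integral_exp_mul_Ioi hθτ, mul_zero, Real.exp_zero, neg_div_neg_eq]
  rw [← hmean]
  exact tendsto_integral_of_tendsto_measureReal_lt hUI (fun n ω ↦ by positivity)
    (.of_forall fun x hx ↦ hX.tendsto_measureReal_lt_toNat_hittingTime_div hθ hτ hu hx)
    (integrableOn_exp_mul_Ioi hθτ 0)

/-- Let `X` have common marginal distribution function `F` and extremal index
`θ ∈ (0,1]` in the strong sense. If `n (1 − F(u_n)) → 1` and the family
`{T*(u_n)/n : n ≥ 1}` is uniformly integrable, then `E (T*(u_n)/n) → 1/θ`,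
where `T*(u)` is the first hitting time of the level `u`. -/
theorem tendsto_expectation_hittingTime {Ω : Type*} [MeasurableSpace Ω] (P : Measure Ω)
    [IsProbabilityMeasure P] (X : ℕ → Ω → ℝ) (F : ℝ → ℝ)
    (hF : ∀ x : ℝ, F x = (P {ω | X 1 ω ≤ x}).toReal)
    (θ : ℝ) (hθ0 : 0 < θ) (hθ1 : θ ≤ 1)
    (hEI : ∀ (v : ℕ → ℝ) (s : ℝ), 0 < s →
      Tendsto (fun n : ℕ => (n : ℝ) * (1 - F (v n))) atTop (nhds s) →
      Tendsto (fun n : ℕ => (P {ω | ∀ i ∈ Finset.Icc 1 n, X i ω ≤ v n}).toReal)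
        atTop (nhds (Real.exp (-θ * s))))
    (u : ℕ → ℝ)
    (hu : Tendsto (fun n : ℕ => (n : ℝ) * (1 - F (u n))) atTop (nhds (1 : ℝ)))
    (hUI : UniformIntegrable
      (fun (n : ℕ) (ω : Ω) => ((hittingTime X (u n) ω).toNat : ℝ) / n) 1 P) :
    Tendsto (fun n : ℕ => ∫ ω, ((hittingTime X (u n) ω).toNat : ℝ) / n ∂P)
      atTop (nhds (1 / θ)) := by
  obtain rfl : F = fun x ↦ P.real {ω | X 1 ω ≤ x} := funext hF
  simpa only [mul_one] using tendsto_expectation_hittingTime_general hEI hθ0 one_pos hu hUI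
end
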